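/- Let G be a plane graph and C₁,...,C_m a concentric sequence of cycles in G. If there exist indices i, j ∈ [m] with |i − j| ≥ t + 1 such that μ_G(C_i, C_j) ≥ t (there are t vertex-disjoint paths between C_i and C_j), then the treewidth of G is at least t. -/

import Mathlib

open SimpleGraph

variable {V : Type}

/-- A drawing of the graph `G` in the plane (identified with `ℂ`): vertices are distinct
points and each edge is a simple curve between its endpoints; distinct edges meet only at
common endpoints, and the interior of an edge avoids all vertex points. -/
structure PlaneEmb (G : SimpleGraph V) where
  pos : V → ℂ
  pos_inj : Function.Injective pos
  curve : (u v : V) → G.Adj u v → ℝ → ℂ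
  curve_cont : ∀ u v h, ContinuousOn (curve u v h) (Set.Icc 0 1)
  curve_zero : ∀ u v h, curve u v h 0 = pos u
  curve_one : ∀ u v h, curve u v h 1 = pos v
  curve_injOn : ∀ u v h, Set.InjOn (curve u v h) (Set.Icc 0 1)
  curve_symm : ∀ u v (h : G.Adj u v) (t : ℝ), curve v u h.symm t = curve u v h (1 - t)
  curve_avoid : ∀ u v (h : G.Adj u v), ∀ t ∈ Set.Ioo (0:ℝ) 1, ∀ w, curve u v h t ≠ pos w
  curve_disjoint : ∀ u v (h : G.Adj u v), ∀ u' v' (h' : G.Adj u' v'), s(u, v) ≠ s(u', v') →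
    ∀ t ∈ Set.Ioo (0:ℝ) 1, ∀ t' ∈ Set.Ioo (0:ℝ) 1, curve u v h t ≠ curve u' v' h' t'

namespace PlaneEmb

variable {G : SimpleGraph V}

/-- The subset of the plane covered by the drawing of `G`. -/
def image (emb : PlaneEmb G) : Set ℂ :=
  Set.range emb.pos ∪ ⋃ (u : V) (v : V) (h : G.Adj u v), emb.curve u v h '' Set.Icc 0 1

/-- The subset of the plane covered by the drawing of a walk. -/
def walkImage (emb : PlaneEmb G) {u v : V} (p : G.Walk u v) : Set ℂ :=
  {emb.pos u} ∪ ⋃ d ∈ p.darts, emb.curve d.toProd.1 d.toProd.2 d.adj '' Set.Icc 0 1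

end PlaneEmb

/-- The disc of a subset `S` of the plane:  `S` together with all bounded connected
components of its complement. -/
def discOf (S : Set ℂ) : Set ℂ :=
  S ∪ {z | z ∉ S ∧ Bornology.IsBounded (connectedComponentIn Sᶜ z)}

/-- There are `n` pairwise vertex-disjoint `(X,Y)`-paths in `G`. -/
def DisjointPathFamily (G : SimpleGraph V) (X Y : Set V) (n : ℕ) : Prop :=
  ∃ (s t : Fin n → V) (P : ∀ i, G.Walk (s i) (t i)),
    (∀ i, s i ∈ X) ∧ (∀ i, t i ∈ Y) ∧ (∀ i, (P i).IsPath) ∧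
      ∀ i j, i ≠ j → ∀ x, x ∈ (P i).support → x ∉ (P j).support

/-- A tree decomposition of `G`: a tree of bags covering all vertices and edges, in which
the bags containing any fixed vertex form a connected subtree (expressed by requiring the
vertex to appear in every bag along any path between two bags containing it). -/
structure TreeDecomp (G : SimpleGraph V) where
  ι : Type
  T : SimpleGraph ι
  tree : T.IsTree
  bag : ι → Finset V
  mem_bag : ∀ v : V, ∃ i, v ∈ bag i
  edge_bag : ∀ u v : V, G.Adj u v → ∃ i, u ∈ bag i ∧ v ∈ bag i
  path_bag : ∀ (v : V) (i j : ι), v ∈ bag i → v ∈ bag j →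
    ∀ p : T.Walk i j, p.IsPath → ∀ x ∈ p.support, v ∈ bag x

open Complex in
lemma aux_log {A : Type} [TopologicalSpace A] [SimplyConnectedSpace A] [LocallyPathConnectedSpace A]
    (f : A → ℂ) (hf : Continuous f) (h0 : ∀ a, f a ≠ 0) :
    ∃ g : A → ℂ, Continuous g ∧ ∀ a, Complex.exp (g a) = f a := by
  obtain ⟨a₀⟩ : Nonempty A := inferInstance
  rcases isCoveringMapOn_exp.existsUnique_continuousMap_lifts (⟨f, hf⟩ : C(A, ℂ))
    (a₀ := a₀) (exp_log (h0 a₀)) (fun x => h0 x) with ⟨g, ⟨-, hg⟩, -⟩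
  exact ⟨g, g.continuous, fun a => congrFun hg a⟩

open Complex in
lemma aux_uniq {A : Type} [TopologicalSpace A] [SimplyConnectedSpace A]
    [LocallyPathConnectedSpace A]
    (f g : A → ℂ) (hf : Continuous f) (hg : Continuous g) (h : ∀ a, exp (f a) = exp (g a))
    (a₀ : A) (h0 : f a₀ = g a₀) (a : A) : f a = g a := by
  rcases isCoveringMapOn_exp.existsUnique_continuousMap_lifts
    (⟨fun a => exp (f a), by fun_prop⟩ : C(A, ℂ))
    (a₀ := a₀) (e₀ := f a₀) rfl (fun x => exp_ne_zero _) with ⟨k, -, hk⟩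
  have h1 := hk ⟨f, hf⟩ ⟨rfl, rfl⟩
  have h2 := hk ⟨g, hg⟩ ⟨h0.symm, by ext x; exact (h x).symm⟩
  have := h1.trans h2.symm
  exact congrArg (fun F : C(A, ℂ) => F a) this

open Complex in
lemma aux_nolog (g : ℂ → ℂ) (hg : Continuous g) (q : ℂ) (R : ℝ) (hR : 0 < R)
    (h : ∀ z, ‖z - q‖ = R → exp (g z) = z - q) : False := by
  have hE : ∀ x : ℝ, exp (g (q + R * exp (x * I))) = R * exp (x * I) := by
    intro x
    rw [h]
    · ring
    · simp [norm_exp_ofReal_mul_I, abs_of_pos hR]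
  have key := aux_uniq (fun x : ℝ => g (q + R * exp (x * I)))
    (fun x : ℝ => g (q + R) + x * I) (by fun_prop) (by fun_prop) (fun x => by
      rw [hE, exp_add]
      have := hE 0
      simp at this
      rw [this]) 0 (by simp) (2 * Real.pi)
  simp [Complex.exp_two_pi_mul_I] at key

/-- continuous logarithms exist on `A` -/
def LogProp (A : Set ℂ) : Prop :=
  ∀ f : ℂ → ℂ, ContinuousOn f A → (∀ z ∈ A, f z ≠ 0) →
    ∃ g : ℂ → ℂ, ContinuousOn g A ∧ ∀ z ∈ A, Complex.exp (g z) = f z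

lemma LogProp.singleton (x : ℂ) : LogProp {x} := by
  intro f _ h0
  refine ⟨fun _ => Complex.log (f x), continuousOn_const, ?_⟩
  rintro z rfl
  exact Complex.exp_log (h0 z rfl)

lemma LogProp.union {A B : Set ℂ} (hA : LogProp A) (hB : LogProp B) (cA : IsClosed A)
    (cB : IsClosed B) (x : ℂ) (hx : A ∩ B = {x}) : LogProp (A ∪ B) := by
  classical
  intro f hf h0
  obtain ⟨a, ca, ha⟩ := hA f (hf.mono Set.subset_union_left) (fun z hz => h0 z (Or.inl hz))
  obtain ⟨b, cb, hb⟩ := hB f (hf.mono Set.subset_union_right) (fun z hz => h0 z (Or.inr hz))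
  have hxm : x ∈ A ∩ B := by rw [hx]; rfl
  refine ⟨fun z => if z ∈ A then a z else b z + (a x - b x), ?_, ?_⟩
  · apply ContinuousOn.union_of_isClosed _ _ cA cB
    · exact ca.congr (fun z hz => by simp [hz])
    · refine (cb.add (continuousOn_const (c := a x - b x))).congr (fun z hz => ?_)
      by_cases h : z ∈ A
      · have : z ∈ A ∩ B := ⟨h, hz⟩
        rw [hx] at this
        obtain rfl : z = x := this
        simp [h]
      · simp [h]
  · intro z hz
    by_cases h : z ∈ A
    · simp [h, ha]
    · have hzB : z ∈ B := hz.resolve_left h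
      simp only [h, if_false]
      rw [Complex.exp_add, Complex.exp_sub, ha x hxm.1, hb x hxm.2,
        div_self (h0 x (Or.inl hxm.1)), mul_one, hb z hzB]

lemma LogProp.curve (γ : ℝ → ℂ) (a b : ℝ) (hab : a ≤ b) (hc : ContinuousOn γ (Set.Icc a b))
    (hi : Set.InjOn γ (Set.Icc a b)) : LogProp (γ '' Set.Icc a b) := by
  intro f hf h0
  have hpc : Continuous fun x : ℝ => (Set.projIcc a b hab x : ℝ) := by fun_prop
  have hcomp : ContinuousOn (f ∘ γ) (Set.Icc a b) := hf.comp hc (Set.mapsTo_image _ _)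
  obtain ⟨g, cg, hg⟩ := aux_log (A := ℝ) (fun x => f (γ (Set.projIcc a b hab x)))
    (hcomp.comp_continuous hpc (fun x => Subtype.prop _))
    (fun x => h0 _ ⟨_, Subtype.prop _, rfl⟩)
  have hΓ : Topology.IsClosedEmbedding (fun x : Set.Icc a b => γ x) := by
    apply Continuous.isClosedEmbedding
    · exact hc.comp_continuous continuous_subtype_val (fun x => x.2)
    · intro x y h
      exact Subtype.ext (hi x.2 y.2 h)
  obtain ⟨G, hG⟩ := ContinuousMap.exists_extension' hΓ
    (⟨fun x : Set.Icc a b => g x, by fun_prop⟩ : C(Set.Icc a b, ℂ))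
  refine ⟨G, G.continuous.continuousOn, ?_⟩
  rintro _ ⟨x, hx, rfl⟩
  have h1 : G (γ x) = g x := congrFun hG ⟨x, hx⟩
  rw [h1, hg, Set.projIcc_of_mem hab hx]

lemma frontier_comp_subset {S : Set ℂ} (hS : IsClosed S) (q : ℂ) :
    frontier (connectedComponentIn Sᶜ q) ⊆ S := by
  intro z hz
  by_contra hzS
  have ho : IsOpen (connectedComponentIn Sᶜ z) := hS.isOpen_compl.connectedComponentIn
  have hzc : z ∈ connectedComponentIn Sᶜ z := mem_connectedComponentIn hzS
  have ho' : IsOpen (connectedComponentIn Sᶜ q) := hS.isOpen_compl.connectedComponentIn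
  obtain ⟨w, hw1, hw2⟩ := mem_closure_iff.1 hz.1 _ ho hzc
  have e1 := connectedComponentIn_eq hw1
  have e2 := connectedComponentIn_eq hw2
  have : z ∈ connectedComponentIn Sᶜ q := by rw [e2, ← e1]; exact hzc
  exact hz.2 (by rwa [ho'.interior_eq])

/-- A compact set with continuous logarithms does not separate. -/
lemma LogProp.unbounded {A : Set ℂ} (hA : LogProp A) (cA : IsClosed A) (q : ℂ) (hq : q ∉ A) :
    ¬ Bornology.IsBounded (connectedComponentIn Aᶜ q) := by
  classical
  intro hb
  set U := connectedComponentIn Aᶜ q with hU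
  have hqU : q ∈ U := mem_connectedComponentIn hq
  have hfr : frontier U ⊆ A := frontier_comp_subset cA q
  obtain ⟨g0, cg0, hg0⟩ := hA (fun z => z - q) (by fun_prop) (fun z hz => by
    intro h
    exact hq (by rwa [← sub_eq_zero.1 h]))
  obtain ⟨g, hg⟩ := ContinuousMap.exists_restrict_eq cA
    (⟨fun z : A => g0 z, cg0.comp_continuous continuous_subtype_val (fun x => x.2)⟩ : C(A, ℂ))
  have hgA : ∀ z ∈ A, Complex.exp (g z) = z - q := by
    intro z hz
    have : g z = g0 z := congrArg (fun F : C(A, ℂ) => F ⟨z, hz⟩) hg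
    rw [this, hg0 z hz]
  obtain ⟨k, ck, hk⟩ := aux_log (A := ℂ) (fun z => if z ∈ U then Complex.exp (g z) else z - q)
    (by
      apply Continuous.if
      · intro z hz
        exact hgA z (hfr hz)
      · fun_prop
      · fun_prop) (by
      intro z
      by_cases h : z ∈ U
      · simp [h]
      · simp only [h, if_false]
        intro h'
        exact h (by rwa [sub_eq_zero.1 h']))
  obtain ⟨R, hR⟩ := hb.subset_ball q
  have hRp : 0 < R := by
    have := hR hqU
    simpa using this
  apply aux_nolog k ck q R hRp
  intro z hz
  rw [hk]
  have : z ∉ U := by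
    intro h
    have := hR h
    rw [Metric.mem_ball, dist_eq_norm] at this
    linarith
  simp [this]

lemma discOf_subset_bounded {S : Set ℂ} (hS : IsCompact S) : Bornology.IsBounded (discOf S) := by
  obtain ⟨R, hR⟩ := hS.isBounded.subset_closedBall 0
  refine (Metric.isBounded_closedBall (x := (0:ℂ)) (r := max R 0)).subset ?_
  intro z hz
  by_contra hzR
  have hz' : max R 0 < ‖z‖ := by simpa using hzR
  have hzpos : 0 < ‖z‖ := (le_max_right _ _).trans_lt hz'
  rcases hz with hz | ⟨hzS, hb⟩
  · have := hR hz
    simp at this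
    have := le_max_left R 0
    linarith
  · have hpre : IsPreconnected ((fun s : ℝ => (s:ℂ) * z) '' Set.Ici 1) :=
      isPreconnected_Ici.image _ (by fun_prop)
    have hsub : ((fun s : ℝ => (s:ℂ) * z) '' Set.Ici 1) ⊆ Sᶜ := by
      rintro _ ⟨s, hs, rfl⟩ hm
      have h1 := hR hm
      simp at h1
      have : (1:ℝ) ≤ s := hs
      rw [abs_of_pos (by linarith)] at h1
      have := le_max_left R 0
      nlinarith
    have h2 := hpre.subset_connectedComponentIn (x := z) ⟨1, by simp, by simp⟩ hsub
    obtain ⟨M, hM⟩ := (hb.subset h2).subset_closedBall 0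
    have h3 := hM ⟨max 1 ((|M| + 1) / ‖z‖), by simp, rfl⟩
    simp at h3
    rw [abs_of_pos (by positivity)] at h3
    have h4 : (|M| + 1) / ‖z‖ * ‖z‖ ≤ M := le_trans (by gcongr; exact le_max_right _ _) h3
    rw [div_mul_cancel₀ _ hzpos.ne'] at h4
    have := le_abs_self M
    linarith

lemma mem_discOf_of_comp {S : Set ℂ} {w z : ℂ} (hz : z ∉ S) (hw : w ∈ connectedComponentIn Sᶜ z)
    (h : z ∈ discOf S) : w ∈ discOf S ∧ w ∉ S := by
  have hwS : w ∉ S := connectedComponentIn_subset _ _ hw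
  refine ⟨Or.inr ⟨hwS, ?_⟩, hwS⟩
  rcases h with h | h
  · exact absurd h hz
  · rw [← connectedComponentIn_eq hw]; exact h.2

lemma discOf_diff_subset_interior {S : Set ℂ} (hS : IsClosed S) : discOf S \ S ⊆ interior (discOf S) := by
  intro z hz
  rw [mem_interior]
  exact ⟨connectedComponentIn Sᶜ z, fun w hw => (mem_discOf_of_comp hz.2 hw hz.1).1,
    hS.isOpen_compl.connectedComponentIn, mem_connectedComponentIn hz.2⟩

lemma isOpen_discOf_compl {S : Set ℂ} (hS : IsClosed S) : IsOpen (discOf S)ᶜ := by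
  rw [isOpen_iff_mem_nhds]
  intro z hz
  have hzS : z ∉ S := fun h => hz (Or.inl h)
  refine Filter.mem_of_superset
    ((hS.isOpen_compl.connectedComponentIn (x := z)).mem_nhds (mem_connectedComponentIn hzS)) ?_
  intro w hw hwd
  have hwS : w ∉ S := connectedComponentIn_subset _ _ hw
  have : z ∈ connectedComponentIn Sᶜ w := by
    rw [← connectedComponentIn_eq hw]; exact mem_connectedComponentIn hzS
  exact hz (mem_discOf_of_comp hwS this hwd).1

lemma boundary_lemma {S : Set ℂ} (hS : IsCompact S) (p : ℂ)
    (hA : ∀ ε > 0, ∃ A ⊆ S, IsClosed A ∧ LogProp A ∧ p ∉ A ∧ S \ A ⊆ Metric.ball p ε) :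
    p ∉ interior (discOf S) := by
  intro hpi
  obtain ⟨ε, hε, hball⟩ := Metric.isOpen_iff.1 isOpen_interior p hpi
  obtain ⟨A, hAS, cA, lA, hpA, hSA⟩ := hA ε hε
  have hun := lA.unbounded cA p hpA
  apply hun
  refine (discOf_subset_bounded hS).subset (subset_trans ?_ interior_subset)
  refine isPreconnected_connectedComponentIn.subset_left_of_subset_union isOpen_interior
    (isOpen_discOf_compl hS.isClosed) ?_ ?_ ⟨p, mem_connectedComponentIn hpA, hpi⟩
  · exact (disjoint_compl_right (a := discOf S)).mono_left interior_subset
  · intro w hw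
    have hwA : w ∉ A := connectedComponentIn_subset _ _ hw
    by_cases hd : w ∈ discOf S
    · left
      by_cases hwS : w ∈ S
      · exact hball (hSA ⟨hwS, hwA⟩)
      · exact discOf_diff_subset_interior hS.isClosed ⟨hd, hwS⟩
    · exact Or.inr hd

lemma nested_lemma {S T : Set ℂ} (hS : IsCompact S) (cT : IsConnected T)
    (hSn : S.Nonempty)
    (h : S ⊆ interior (discOf T)) (hT' : Disjoint T (interior (discOf T))) :
    discOf S ⊆ discOf T \ T := by
  have hST : ∀ z ∈ S, z ∈ discOf T ∧ z ∉ T := fun z hz =>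
    ⟨interior_subset (h hz), fun hzT => Set.disjoint_left.1 hT' hzT (h hz)⟩
  intro z hz
  rcases hz with hz | ⟨hzS, hb⟩
  · exact hST z hz
  set W := connectedComponentIn Sᶜ z with hW
  have hzW : z ∈ W := mem_connectedComponentIn hzS
  have hWS : W ⊆ Sᶜ := connectedComponentIn_subset _ _
  have hWT : ∀ w ∈ W, w ∉ T := by
    intro w hw hwT
    have hTS : T ⊆ Sᶜ := fun x hx hxS => (hST x hxS).2 hx
    have hTW : T ⊆ W := by
      rw [hW, connectedComponentIn_eq hw]
      exact cT.isPreconnected.subset_connectedComponentIn hwT hTS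
    obtain ⟨p, hpS, hpm⟩ := hS.exists_isMaxOn hSn (Complex.continuous_re.continuousOn)
    have hray : IsPreconnected ((fun s : ℝ => p + (s:ℂ)) '' Set.Ioi 0) :=
      isPreconnected_Ioi.image _ (by fun_prop)
    have hray' : IsPreconnected ((fun s : ℝ => p + (s:ℂ)) '' Set.Ici 0) :=
      isPreconnected_Ici.image _ (by fun_prop)
    have hunb : ∀ X : Set ℂ, Bornology.IsBounded X →
        ¬ ((fun s : ℝ => p + (s:ℂ)) '' Set.Ioi 0) ⊆ X := by
      intro X hX hsub
      obtain ⟨M, hM⟩ := (hX.subset hsub).subset_closedBall p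
      have h3 := hM ⟨|M| + 1, by simp; positivity, rfl⟩
      simp at h3
      have h5 := le_abs_self M
      have h6 : ‖((|M|:ℝ):ℂ) + 1‖ = |M| + 1 := by
        rw [← Complex.ofReal_one, ← Complex.ofReal_add, Complex.norm_real, Real.norm_eq_abs,
          abs_of_pos (by positivity)]
      rw [h6] at h3
      linarith
    have hrS : ((fun s : ℝ => p + (s:ℂ)) '' Set.Ioi 0) ⊆ Sᶜ := by
      rintro _ ⟨s, hs, rfl⟩ hm
      have := hpm hm
      simp at this
      have : 0 < s := hs
      linarith
    have hrT : ((fun s : ℝ => p + (s:ℂ)) '' Set.Ici 0) ⊆ Tᶜ := by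
      rintro _ ⟨s, hs, rfl⟩ hm
      have hs0 : 0 ≤ s := hs
      rcases hs0.eq_or_lt with rfl | hs1
      · exact (hST p hpS).2 (by simpa using hm)
      · have h7 := hTW hm
        have h8 := hray.subset_connectedComponentIn (x := p + (s:ℂ)) ⟨s, hs1, rfl⟩ hrS
        rw [← connectedComponentIn_eq (show p + (s:ℂ) ∈ connectedComponentIn Sᶜ z from h7)] at h8
        exact hunb _ hb h8
    have h9 := hray'.subset_connectedComponentIn (x := p) ⟨0, by simp, by simp⟩ hrT
    have h10 : Bornology.IsBounded (connectedComponentIn Tᶜ p) := by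
      rcases (hST p hpS).1 with h' | h'
      · exact absurd h' (hST p hpS).2
      · exact h'.2
    exact hunb _ h10 ((Set.image_mono Set.Ioi_subset_Ici_self).trans h9)
  have hcl : IsPreconnected (closure W) := isPreconnected_connectedComponentIn.closure
  have hWo : IsOpen W := hS.isClosed.isOpen_compl.connectedComponentIn
  have hfr : frontier W ⊆ S := frontier_comp_subset hS.isClosed z
  have hclT : closure W ⊆ Tᶜ := by
    intro x hx
    by_cases hxW : x ∈ W
    · exact hWT x hxW
    · exact (hST x (hfr ⟨hx, by rwa [hWo.interior_eq]⟩)).2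
  have hne : (frontier W).Nonempty := by
    rw [Set.nonempty_iff_ne_empty]
    intro he
    have hclopen : IsClopen W := isClopen_iff_frontier_eq_empty.2 he
    have := hclopen.eq_univ ⟨z, hzW⟩
    rw [this] at hb
    exact NormedSpace.unbounded_univ ℝ ℂ hb
  obtain ⟨x, hx⟩ := hne
  have h11 := hcl.subset_connectedComponentIn (x := x) hx.1 hclT (subset_closure hzW)
  exact mem_discOf_of_comp (hST x (hfr hx)).2 h11 (hST x (hfr hx)).1

namespace PlaneEmb

variable {G : SimpleGraph V} (emb : PlaneEmb G)

lemma walkImage_cons {u v w : V} (h : G.Adj u v) (p : G.Walk v w) :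
    emb.walkImage (Walk.cons h p) = emb.curve u v h '' Set.Icc 0 1 ∪ emb.walkImage p := by
  have h0 : emb.pos u ∈ emb.curve u v h '' Set.Icc 0 1 := ⟨0, by simp, emb.curve_zero u v h⟩
  have h1 : emb.pos v ∈ emb.curve u v h '' Set.Icc 0 1 := ⟨1, by simp, emb.curve_one u v h⟩
  ext z
  simp only [walkImage, Walk.darts_cons, List.mem_cons, Set.mem_union, Set.mem_singleton_iff,
    Set.iUnion_iUnion_eq_or_left]
  constructor
  · rintro (rfl | h' | h')
    · exact Or.inl h0
    · exact Or.inl h'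
    · exact Or.inr (Or.inr h')
  · rintro (h' | rfl | h')
    · exact Or.inr (Or.inl h')
    · exact Or.inr (Or.inl h1)
    · exact Or.inr (Or.inr h')

lemma pos_mem_walkImage {u v : V} (p : G.Walk u v) {w : V} (hw : w ∈ p.support) :
    emb.pos w ∈ emb.walkImage p := by
  induction p with
  | nil => simp at hw; subst hw; exact Or.inl rfl
  | cons h p ih =>
    rw [walkImage_cons]
    rw [Walk.support_cons, List.mem_cons] at hw
    rcases hw with rfl | hw
    · exact Or.inl ⟨0, by simp, emb.curve_zero _ _ h⟩
    · exact Or.inr (ih hw)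

lemma curve_cases {u v : V} (h : G.Adj u v) {s : ℝ} (hs : s ∈ Set.Icc (0:ℝ) 1) :
    emb.curve u v h s = emb.pos u ∨ emb.curve u v h s = emb.pos v ∨ s ∈ Set.Ioo (0:ℝ) 1 := by
  rcases hs.1.eq_or_lt with rfl | h0
  · exact Or.inl (emb.curve_zero _ _ _)
  rcases hs.2.eq_or_lt with rfl | h1
  · exact Or.inr (Or.inl (emb.curve_one _ _ _))
  · exact Or.inr (Or.inr ⟨h0, h1⟩)

lemma mem_walkImage {u v : V} (p : G.Walk u v) {z : ℂ} (hz : z ∈ emb.walkImage p) :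
    (∃ w ∈ p.support, z = emb.pos w) ∨
    ∃ d ∈ p.darts, ∃ s ∈ Set.Ioo (0:ℝ) 1, z = emb.curve d.toProd.1 d.toProd.2 d.adj s := by
  rcases hz with hz | hz
  · exact Or.inl ⟨u, p.start_mem_support, hz⟩
  · simp only [Set.mem_iUnion] at hz
    obtain ⟨d, hd, s, hs, rfl⟩ := hz
    rcases emb.curve_cases d.adj hs with h | h | h
    · exact Or.inl ⟨_, p.dart_fst_mem_support_of_mem_darts hd, h⟩
    · exact Or.inl ⟨_, p.dart_snd_mem_support_of_mem_darts hd, h⟩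
    · exact Or.inr ⟨d, hd, s, h, rfl⟩

lemma isCompact_walkImage {u v : V} (p : G.Walk u v) : IsCompact (emb.walkImage p) := by
  induction p with
  | nil => simp [walkImage]
  | cons h p ih =>
    rw [walkImage_cons]
    exact (isCompact_Icc.image_of_continuousOn (emb.curve_cont _ _ h)).union ih

lemma isConnected_walkImage {u v : V} (p : G.Walk u v) : IsConnected (emb.walkImage p) := by
  induction p with
  | nil => simp [walkImage, isConnected_singleton]
  | @cons a b c h p ih =>
    rw [walkImage_cons]
    refine IsConnected.union ⟨emb.pos b, ⟨1, by simp, emb.curve_one _ _ h⟩,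
      emb.pos_mem_walkImage p p.start_mem_support⟩ ?_ ih
    exact (isConnected_Icc zero_le_one).image _ (emb.curve_cont _ _ h)

lemma walkImage_inter {u v u' v' : V} (p : G.Walk u v) (q : G.Walk u' v') {z : ℂ}
    (hp : z ∈ emb.walkImage p) (hq : z ∈ emb.walkImage q) : ∃ w ∈ p.support, w ∈ q.support := by
  rcases emb.mem_walkImage p hp with ⟨w, hw, rfl⟩ | ⟨d, hd, s, hs, rfl⟩
  · rcases emb.mem_walkImage q hq with ⟨w', hw', h⟩ | ⟨d, hd, s, hs, h⟩
    · rw [emb.pos_inj h] at hw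
      exact ⟨w', hw, hw'⟩
    · exact absurd h.symm (emb.curve_avoid _ _ d.adj s hs w)
  · rcases emb.mem_walkImage q hq with ⟨w', hw', h⟩ | ⟨d', hd', s', hs', h⟩
    · exact absurd h (emb.curve_avoid _ _ d.adj s hs w')
    · by_cases he : s(d.toProd.1, d.toProd.2) = s(d'.toProd.1, d'.toProd.2)
      · refine ⟨d.toProd.1, p.dart_fst_mem_support_of_mem_darts hd, ?_⟩
        rcases Sym2.eq_iff.1 he with h' | h'
        · rw [h'.1]; exact q.dart_fst_mem_support_of_mem_darts hd'
        · rw [h'.1]; exact q.dart_snd_mem_support_of_mem_darts hd'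
      · exact absurd h (emb.curve_disjoint _ _ d.adj _ _ d'.adj he s hs s' hs')

/-- an edge not in the walk meets it only in endpoints of the edge -/
lemma curve_inter {u v a b : V} (h : G.Adj u v) (p : G.Walk a b) (he : s(u, v) ∉ p.edges)
    {s : ℝ} (hs : s ∈ Set.Icc (0:ℝ) 1) (hz : emb.curve u v h s ∈ emb.walkImage p) :
    (s = 0 ∧ u ∈ p.support) ∨ (s = 1 ∧ v ∈ p.support) := by
  have hio : s ∉ Set.Ioo (0:ℝ) 1 := by
    intro hs'
    rcases emb.mem_walkImage p hz with ⟨w, hw, h'⟩ | ⟨d, hd, s', hs'', h'⟩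
    · exact emb.curve_avoid _ _ h s hs' w h'
    · refine emb.curve_disjoint _ _ h _ _ d.adj ?_ s hs' s' hs'' h'
      intro h3
      apply he
      rw [h3]
      exact List.mem_map_of_mem hd
  have key : ∀ w, emb.curve u v h s = emb.pos w → w ∈ p.support := by
    intro w hw
    rcases emb.mem_walkImage p hz with ⟨w', hw', h'⟩ | ⟨d, hd, s', hs'', h'⟩
    · rw [hw] at h'
      rw [emb.pos_inj h']; exact hw'
    · exact absurd (h'.symm.trans hw) (emb.curve_avoid _ _ d.adj s' hs'' w)
  rcases hs.1.eq_or_lt with rfl | h0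
  · exact Or.inl ⟨rfl, key _ (emb.curve_zero _ _ _)⟩
  rcases hs.2.eq_or_lt with rfl | h1
  · exact Or.inr ⟨rfl, key _ (emb.curve_one _ _ _)⟩
  · exact absurd ⟨h0, h1⟩ hio

lemma curve_logProp {u v : V} (h : G.Adj u v) (a b : ℝ) (ha : 0 ≤ a) (hab : a ≤ b) (hb : b ≤ 1) :
    LogProp (emb.curve u v h '' Set.Icc a b) :=
  LogProp.curve _ a b hab ((emb.curve_cont u v h).mono (Set.Icc_subset_Icc ha hb))
    ((emb.curve_injOn u v h).mono (Set.Icc_subset_Icc ha hb))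

lemma curve_closed {u v : V} (h : G.Adj u v) (a b : ℝ) (ha : 0 ≤ a) (hb : b ≤ 1) :
    IsClosed (emb.curve u v h '' Set.Icc a b) :=
  (isCompact_Icc.image_of_continuousOn
    ((emb.curve_cont u v h).mono (Set.Icc_subset_Icc ha hb))).isClosed

lemma path_logProp {u v : V} (p : G.Walk u v) (hp : p.IsPath) : LogProp (emb.walkImage p) := by
  induction p with
  | nil => simpa [walkImage] using LogProp.singleton _
  | @cons a b c h p ih =>
    rw [Walk.cons_isPath_iff] at hp
    rw [walkImage_cons]
    refine LogProp.union (emb.curve_logProp h 0 1 le_rfl zero_le_one le_rfl) (ih hp.1)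
      (emb.curve_closed h 0 1 le_rfl le_rfl) (emb.isCompact_walkImage p).isClosed (emb.pos b) ?_
    have he : s(a, b) ∉ p.edges := fun h' => hp.2 (p.fst_mem_support_of_mem_edges h')
    ext z
    constructor
    · rintro ⟨⟨s, hs, rfl⟩, h2⟩
      rcases emb.curve_inter h p he hs h2 with h' | h'
      · exact absurd h'.2 hp.2
      · rw [h'.1, emb.curve_one]; rfl
    · rintro rfl
      exact ⟨⟨1, by simp, emb.curve_one _ _ h⟩, emb.pos_mem_walkImage p p.start_mem_support⟩

/-- interior edge points of the first edge of a cycle are not interior to the disc -/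
lemma cycle_aux {u v : V} (h : G.Adj u v) (p : G.Walk v u) (hp : p.IsPath) (he : s(u, v) ∉ p.edges)
    (τ : ℝ) (hτ : τ ∈ Set.Ioo (0:ℝ) 1) :
    emb.curve u v h τ ∉ interior (discOf (emb.walkImage (Walk.cons h p))) := by
  have hτ' : τ ∈ Set.Icc (0:ℝ) 1 := Set.Ioo_subset_Icc_self hτ
  apply boundary_lemma (emb.isCompact_walkImage _)
  intro ε hε
  have hc : ContinuousAt (emb.curve u v h) τ :=
    (emb.curve_cont u v h).continuousAt (Icc_mem_nhds hτ.1 hτ.2)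
  obtain ⟨δ, hδ, hδε⟩ := Metric.continuousAt_iff.1 hc ε hε
  obtain ⟨η, hη0, hη1, hη2, hη3⟩ : ∃ η > 0, η < δ ∧ η < τ ∧ η < 1 - τ := by
    refine ⟨min δ (min τ (1 - τ)) / 2, ?_, ?_, ?_, ?_⟩
    · have : 0 < min δ (min τ (1 - τ)) :=
        lt_min hδ (lt_min hτ.1 (by linarith [hτ.2]))
      linarith
    all_goals
      have h1 : 0 < min δ (min τ (1 - τ)) := lt_min hδ (lt_min hτ.1 (by linarith [hτ.2]))
      have h2 := min_le_left δ (min τ (1 - τ))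
      have h3 := (min_le_right δ (min τ (1 - τ))).trans (min_le_left _ _)
      have h4 := (min_le_right δ (min τ (1 - τ))).trans (min_le_right _ _)
      linarith
  have hτ1 := hτ.2
  have hinj := emb.curve_injOn u v h
  refine ⟨(emb.walkImage p ∪ emb.curve u v h '' Set.Icc 0 (τ - η)) ∪
    emb.curve u v h '' Set.Icc (τ + η) 1, ?_, ?_, ?_, ?_, ?_⟩
  · rw [walkImage_cons]
    rintro z ((hz | ⟨s, hs, rfl⟩) | ⟨s, hs, rfl⟩)
    · exact Or.inr hz
    · exact Or.inl ⟨s, ⟨hs.1, by linarith [hs.2]⟩, rfl⟩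
    · exact Or.inl ⟨s, ⟨by linarith [hs.1, hτ.1], hs.2⟩, rfl⟩
  · exact ((emb.isCompact_walkImage p).isClosed.union
      (emb.curve_closed h _ _ le_rfl (by linarith))).union
      (emb.curve_closed h _ _ (by linarith [hτ.1]) le_rfl)
  · refine LogProp.union (LogProp.union (emb.path_logProp p hp)
      (emb.curve_logProp h _ _ le_rfl (by linarith) (by linarith))
      (emb.isCompact_walkImage p).isClosed (emb.curve_closed h _ _ le_rfl (by linarith))
      (emb.pos u) ?_)
      (emb.curve_logProp h _ _ (by linarith [hτ.1]) (by linarith) le_rfl)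
      ((emb.isCompact_walkImage p).isClosed.union
      (emb.curve_closed h _ _ le_rfl (by linarith)))
      (emb.curve_closed h _ _ (by linarith [hτ.1]) le_rfl) (emb.pos v) ?_
    · ext z
      constructor
      · rintro ⟨h2, s, hs, rfl⟩
        rcases emb.curve_inter h p he ⟨hs.1, by linarith [hs.2]⟩ h2 with h' | h'
        · rw [h'.1, emb.curve_zero]; rfl
        · exfalso; linarith [hs.2, h'.1]
      · rintro rfl
        exact ⟨emb.pos_mem_walkImage p p.end_mem_support,
          0, ⟨le_rfl, by linarith⟩, emb.curve_zero _ _ h⟩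
    · ext z
      constructor
      · rintro ⟨h2 | ⟨s', hs', h2⟩, s, hs, rfl⟩
        · rcases emb.curve_inter h p he ⟨by linarith [hs.1, hτ.1], hs.2⟩ h2 with h' | h'
          · exfalso; linarith [hs.1, h'.1, hτ.1]
          · rw [h'.1, emb.curve_one]; rfl
        · have := hinj ⟨hs'.1, by linarith [hs'.2]⟩ ⟨by linarith [hs.1, hτ.1], hs.2⟩ h2
          exfalso; linarith [hs'.2, hs.1]
      · rintro rfl
        exact ⟨Or.inl (emb.pos_mem_walkImage p p.start_mem_support),
          1, ⟨by linarith, le_rfl⟩, emb.curve_one _ _ h⟩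
  · rintro ((hz | ⟨s, hs, hz⟩) | ⟨s, hs, hz⟩)
    · rcases emb.curve_inter h p he hτ' hz with h' | h'
      · linarith [hτ.1, h'.1]
      · linarith [h'.1]
    · have := hinj ⟨hs.1, by linarith [hs.2]⟩ hτ' hz
      linarith [hs.2]
    · have := hinj ⟨by linarith [hs.1, hτ.1], hs.2⟩ hτ' hz
      linarith [hs.1]
  · rw [walkImage_cons]
    rintro z ⟨⟨s, hs, rfl⟩ | hz, hn⟩
    · rw [Metric.mem_ball]
      apply hδε
      rw [Real.dist_eq, abs_lt]
      constructor
      · by_contra hcon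
        exact hn (Or.inl (Or.inr ⟨s, ⟨hs.1, by linarith⟩, rfl⟩))
      · by_contra hcon
        exact hn (Or.inr ⟨s, ⟨by linarith, hs.2⟩, rfl⟩)
    · exact absurd (Or.inl (Or.inl hz)) hn

lemma walkImage_eq_darts {u v : V} (p : G.Walk u v) (hp : ¬ p.Nil) :
    emb.walkImage p = ⋃ d ∈ p.darts, emb.curve d.toProd.1 d.toProd.2 d.adj '' Set.Icc 0 1 := by
  cases p with
  | nil => simp at hp
  | cons h p =>
    unfold walkImage
    rw [Set.union_eq_right]
    rintro _ rfl
    simp only [Walk.darts_cons, List.mem_cons, Set.iUnion_iUnion_eq_or_left]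
    exact Or.inl ⟨0, by simp, emb.curve_zero _ _ h⟩

lemma cycle_disjoint {u : V} (c : G.Walk u u) (hc : c.IsCycle) :
    Disjoint (emb.walkImage c) (interior (discOf (emb.walkImage c))) := by
  classical
  rw [Set.disjoint_left]
  intro z hz hzi
  -- find an interior edge point nearby
  have hz' := hz
  rw [emb.walkImage_eq_darts c hc.not_nil] at hz'
  simp only [Set.mem_iUnion] at hz'
  obtain ⟨d, hd, s, hs, rfl⟩ := hz'
  obtain ⟨τ, hτ, hτi⟩ : ∃ τ ∈ Set.Ioo (0:ℝ) 1,
      emb.curve _ _ d.adj τ ∈ interior (discOf (emb.walkImage c)) := by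
    have hcw := (emb.curve_cont _ _ d.adj) s hs
    have hcl : s ∈ closure (Set.Ioo (0:ℝ) 1) := by rwa [closure_Ioo (by norm_num)]
    have hm := (hcw.mono Set.Ioo_subset_Icc_self).preimage_mem_nhdsWithin
      (isOpen_interior.mem_nhds hzi)
    have : (nhdsWithin s (Set.Ioo (0:ℝ) 1)).NeBot := mem_closure_iff_nhdsWithin_neBot.1 hcl
    obtain ⟨τ, h1, h2⟩ := Filter.nonempty_of_mem (Filter.inter_mem hm self_mem_nhdsWithin)
    exact ⟨τ, h2, h1⟩
  have hsup : d.fst ∈ c.support := c.dart_fst_mem_support_of_mem_darts hd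
  have hc' : (c.rotate d.fst hsup).IsCycle := by simpa using hc
  have hdr : ∀ e, e ∈ (c.rotate d.fst hsup).darts ↔ e ∈ c.darts := fun e =>
    (c.rotate_darts d.fst hsup).mem_iff
  have hI : emb.walkImage c = emb.walkImage (c.rotate d.fst hsup) := by
    rw [emb.walkImage_eq_darts c hc.not_nil, emb.walkImage_eq_darts _ hc'.not_nil]
    simp only [hdr]
  rw [hI] at hτi
  have hd' := (hdr d).2 hd
  generalize c.rotate d.fst hsup = c' at hc' hτi hd'
  cases c' with
  | nil => simp at hd'
  | @cons _ w _ h p =>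
    rw [Walk.cons_isCycle_iff] at hc'
    rw [Walk.darts_cons, List.mem_cons] at hd'
    rcases hd' with hd' | hd'
    · have hw : d.toProd.2 = w := congrArg (fun e : G.Dart => e.toProd.2) hd'
      subst hw
      exact emb.cycle_aux h p hc'.1 hc'.2 τ hτ hτi
    · have hn := hc'.1.support_nodup
      rw [← Walk.map_fst_darts_append, List.nodup_append] at hn
      exact hn.2.2 d.fst (List.mem_map_of_mem hd') d.fst (by simp) rfl

end PlaneEmb

/-- A set of vertices which is connected by walks inside it. -/
def WConn {U : Type} (G : SimpleGraph U) (B : Set U) : Prop :=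
  ∀ u ∈ B, ∀ v ∈ B, ∃ p : G.Walk u v, ∀ x ∈ p.support, x ∈ B

lemma WConn.walk {U : Type} {G : SimpleGraph U} {u v : U} (p : G.Walk u v) :
    WConn G {x | x ∈ p.support} := by
  classical
  intro a ha b hb
  refine ⟨(p.takeUntil a ha).reverse.append (p.takeUntil b hb), ?_⟩
  intro x hx
  rw [Walk.mem_support_append_iff, Walk.support_reverse, List.mem_reverse] at hx
  rcases hx with hx | hx
  · exact p.support_takeUntil_subset_support ha hx
  · exact p.support_takeUntil_subset_support hb hx

lemma WConn.union {U : Type} {G : SimpleGraph U} {A B : Set U} (hA : WConn G A) (hB : WConn G B)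
    {c : U} (hcA : c ∈ A) (hcB : c ∈ B) : WConn G (A ∪ B) := by
  have key : ∀ u ∈ A ∪ B, ∃ p : G.Walk u c, ∀ x ∈ p.support, x ∈ A ∪ B := by
    rintro u (hu | hu)
    · obtain ⟨p, hp⟩ := hA u hu c hcA
      exact ⟨p, fun x hx => Or.inl (hp x hx)⟩
    · obtain ⟨p, hp⟩ := hB u hu c hcB
      exact ⟨p, fun x hx => Or.inr (hp x hx)⟩
  intro u hu v hv
  obtain ⟨p, hp⟩ := key u hu
  obtain ⟨q, hq⟩ := key v hv
  refine ⟨p.append q.reverse, fun x hx => ?_⟩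
  rw [Walk.mem_support_append_iff, Walk.support_reverse, List.mem_reverse] at hx
  exact hx.elim (hp x) (hq x)

section Helly

variable {ι : Type} {T : SimpleGraph ι}

lemma tree_path_sub (hT : T.IsTree) {x y : ι} (p q : T.Walk x y) (hp : p.IsPath) :
    p.support ⊆ q.support ∧ p.edges ⊆ q.edges := by
  classical
  have h : p = q.bypass := by
    have := hT.isAcyclic.path_unique ⟨p, hp⟩ ⟨q.bypass, q.bypass_isPath⟩
    exact congrArg Subtype.val this
  rw [h]
  exact ⟨q.support_bypass_subset, q.edges_bypass_subset⟩

lemma tree_exists_path (hT : T.IsTree) (x y : ι) : ∃ p : T.Walk x y, p.IsPath := by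
  classical
  obtain ⟨p⟩ := hT.connected x y
  exact ⟨p.bypass, p.bypass_isPath⟩

lemma tree_median (hT : T.IsTree) {a b c : ι} (p : T.Walk a b) (q : T.Walk a c) (r : T.Walk c b)
    (hp : p.IsPath) : ∃ m, m ∈ p.support ∧ m ∈ q.support ∧ m ∈ r.support := by
  by_cases hb : b ∈ q.support
  · exact ⟨b, p.end_mem_support, hb, r.end_mem_support⟩
  obtain ⟨d, hd, h1, h2⟩ := p.exists_boundary_dart {x | x ∈ q.support} q.start_mem_support hb
  refine ⟨d.fst, p.dart_fst_mem_support_of_mem_darts hd, h1, ?_⟩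
  have he : s(d.fst, d.snd) ∈ (q.append r).edges :=
    (tree_path_sub hT p (q.append r) hp).2 (List.mem_map_of_mem hd)
  rw [Walk.edges_append, List.mem_append] at he
  rcases he with he | he
  · exact absurd (q.snd_mem_support_of_mem_edges he) h2
  · exact r.fst_mem_support_of_mem_edges he

lemma tree_conv_inter (hT : T.IsTree) {A B : Set ι} (hA : WConn T A) (hB : WConn T B) :
    WConn T (A ∩ B) := by
  intro x hx y hy
  obtain ⟨p, hp⟩ := tree_exists_path hT x y
  obtain ⟨q, hq⟩ := hA x hx.1 y hy.1
  obtain ⟨r, hr⟩ := hB x hx.2 y hy.2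
  exact ⟨p, fun z hz => ⟨hq z ((tree_path_sub hT p q hp).1 hz), hr z ((tree_path_sub hT p r hp).1 hz)⟩⟩

lemma tree_helly3 (hT : T.IsTree) {A B C : Set ι} (hA : WConn T A) (hB : WConn T B)
    (hC : WConn T C) (hAB : (A ∩ B).Nonempty) (hAC : (A ∩ C).Nonempty) (hBC : (B ∩ C).Nonempty) :
    (A ∩ B ∩ C).Nonempty := by
  obtain ⟨c, hcA, hcB⟩ := hAB
  obtain ⟨b, hbA, hbC⟩ := hAC
  obtain ⟨a, haB, haC⟩ := hBC
  obtain ⟨p, hp⟩ := tree_exists_path hT a b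
  obtain ⟨p', hp'⟩ := hC a haC b hbC
  obtain ⟨q, hq⟩ := hB a haB c hcB
  obtain ⟨r, hr⟩ := hA c hcA b hbA
  obtain ⟨m, h1, h2, h3⟩ := tree_median hT p q r hp
  exact ⟨m, ⟨hr m h3, hq m h2⟩, hp' m ((tree_path_sub hT p p' hp).1 h1)⟩

lemma tree_helly {κ : Type} (hT : T.IsTree) (s : Finset κ) :
    ∀ F : κ → Set ι, (∀ k, WConn T (F k)) → (∀ k l, (F k ∩ F l).Nonempty) → s.Nonempty →
      ∃ b, ∀ k ∈ s, b ∈ F k := by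
  classical
  induction s using Finset.induction_on with
  | empty => intro F _ _ h; simp at h
  | insert a s ha ih =>
    intro F hF hI _
    by_cases hs : s.Nonempty
    · obtain ⟨b, hb⟩ := ih (fun k => F a ∩ F k) (fun k => tree_conv_inter hT (hF a) (hF k))
        (fun k l => by
          obtain ⟨x, hx⟩ := tree_helly3 hT (hF a) (hF k) (hF l) (hI a k) (hI a l) (hI k l)
          exact ⟨x, ⟨hx.1.1, hx.1.2⟩, hx.1.1, hx.2⟩) hs
      obtain ⟨k0, hk0⟩ := hs
      refine ⟨b, fun k hk => ?_⟩
      rcases Finset.mem_insert.1 hk with rfl | hk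
      · exact (hb k0 hk0).1
      · exact (hb k hk).2
    · rw [Finset.not_nonempty_iff_eq_empty] at hs
      subst hs
      obtain ⟨b, hb⟩ := hI a a
      exact ⟨b, fun k hk => by simp at hk; subst hk; exact hb.1⟩

end Helly

lemma bags_conn {G : SimpleGraph V} (D : TreeDecomp G) {B : Set V} (hB : WConn G B) :
    WConn D.T {x | ∃ v ∈ B, v ∈ D.bag x} := by
  have same : ∀ v ∈ B, ∀ x y, v ∈ D.bag x → v ∈ D.bag y →
      ∃ p : D.T.Walk x y, ∀ z ∈ p.support, z ∈ {x | ∃ v ∈ B, v ∈ D.bag x} := by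
    intro v hv x y hx hy
    obtain ⟨p, hp⟩ := tree_exists_path D.tree x y
    exact ⟨p, fun z hz => ⟨v, hv, D.path_bag v x y hx hy p hp z hz⟩⟩
  rintro x ⟨u, hu, hux⟩ y ⟨v, hv, hvy⟩
  obtain ⟨p, hp⟩ := hB u hu v hv
  clear hu hv
  induction p generalizing x with
  | nil => exact same _ (hp _ (by simp)) x y hux hvy
  | @cons a b c h p ih =>
    obtain ⟨i, hi1, hi2⟩ := D.edge_bag _ _ h
    obtain ⟨q, hq⟩ := same a (hp a (by simp)) x i hux hi1
    obtain ⟨r, hr⟩ := ih i hi2 hvy (fun z hz => hp z (by simp [hz]))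
    refine ⟨q.append r, fun z hz => ?_⟩
    rw [Walk.mem_support_append_iff] at hz
    exact hz.elim (hq z) (hr z)

lemma trunc {G : SimpleGraph V} {u v : V} (p : G.Walk u v) (Y : Set V) (hu : u ∉ Y) (hv : v ∈ Y) :
    ∃ (x y : V) (q : G.Walk u x), (∀ z ∈ q.support, z ∈ p.support ∧ z ∉ Y) ∧ y ∈ Y ∧ G.Adj x y := by
  induction p with
  | nil => exact absurd hv hu
  | @cons a b c h p ih =>
    by_cases hb : b ∈ Y
    · exact ⟨a, b, Walk.nil, by simp [hu], hb, h⟩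
    · obtain ⟨x, y, q, h1, h2, h3⟩ := ih hb hv
      refine ⟨x, y, Walk.cons h q, ?_, h2, h3⟩
      intro z hz
      rw [Walk.support_cons, List.mem_cons] at hz ⊢
      rcases hz with rfl | hz
      · exact ⟨Or.inl rfl, hu⟩
      · exact ⟨Or.inr (h1 z hz).1, (h1 z hz).2⟩

lemma card_of_disjoint {κ : Type} [Fintype κ] (b : Finset V) (F : κ → Set V)
    (hd : ∀ k l, k ≠ l → Disjoint (F k) (F l)) (h : ∀ k, ∃ v ∈ F k, v ∈ b) :
    Fintype.card κ ≤ b.card := by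
  choose f hf hfb using h
  have hinj : Function.Injective f := by
    intro k l hkl
    by_contra hne
    exact Set.disjoint_left.1 (hd k l hne) (hf k) (hkl ▸ hf l)
  rw [← Finset.card_univ]
  exact Finset.card_le_card_of_injOn f (fun k _ => hfb k) hinj.injOn

lemma comb {G : SimpleGraph V} (t : ℕ) (K : Fin (t + 1) → Set V) (Y : Set V)
    (hK : ∀ k, WConn G (K k)) (hY : WConn G Y) (hYn : Y.Nonempty)
    (hd : ∀ k l, k ≠ l → Disjoint (K k) (K l)) (hKY : ∀ k, Disjoint (K k) Y)
    (hsep : ∀ u ∈ K 0, ∀ v ∈ Y, ∀ p : G.Walk u v, ∀ k, ∃ x ∈ p.support, x ∈ K k)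
    (s e : Fin t → V) (P : ∀ i, G.Walk (s i) (e i)) (hs : ∀ i, s i ∈ K 0) (he : ∀ i, e i ∈ Y)
    (hP : ∀ i j, i ≠ j → ∀ x, x ∈ (P i).support → x ∉ (P j).support) (D : TreeDecomp G) :
    ∃ b : D.ι, t + 1 ≤ (D.bag b).card := by
  classical
  have htr := fun l => trunc (P l) Y (Set.disjoint_left.1 (hKY 0) (hs l)) (he l)
  choose x y Q hQ hyY hxy using htr
  have hQK : ∀ l k, ∃ z ∈ (Q l).support, z ∈ K k := by
    intro l k
    obtain ⟨z, hz, hzK⟩ := hsep (s l) (hs l) (y l) (hyY l)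
      ((Q l).append (Walk.cons (hxy l) Walk.nil)) k
    rw [Walk.mem_support_append_iff] at hz
    rcases hz with hz | hz
    · exact ⟨z, hz, hzK⟩
    · simp at hz
      rcases hz with rfl | rfl
      · exact ⟨_, (Q l).end_mem_support, hzK⟩
      · exact absurd (hyY l) (Set.disjoint_left.1 (hKY k) hzK)
  let B : Option (Fin t × Fin (t + 1)) → Set V := fun o =>
    match o with
    | none => Y
    | some (l, k) => {z | z ∈ (Q l).support} ∪ K k
  have hBc : ∀ o, WConn G (B o) := by
    rintro (_ | ⟨l, k⟩)
    · exact hY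
    · obtain ⟨z, h1, h2⟩ := hQK l k
      exact (WConn.walk (Q l)).union (hK k) h1 h2
  have touch : ∀ o o', ∃ u ∈ B o, ∃ v ∈ B o', u = v ∨ G.Adj u v := by
    rintro (_ | ⟨l, k⟩) (_ | ⟨l', k'⟩)
    · obtain ⟨v, hv⟩ := hYn
      exact ⟨v, hv, v, hv, Or.inl rfl⟩
    · exact ⟨y l', hyY l', x l', Or.inl (Q l').end_mem_support, Or.inr (hxy l').symm⟩
    · exact ⟨x l, Or.inl (Q l).end_mem_support, y l, hyY l, Or.inr (hxy l)⟩
    · obtain ⟨z, h1, h2⟩ := hQK l k'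
      exact ⟨z, Or.inl h1, z, Or.inr h2, Or.inl rfl⟩
  obtain ⟨b, hb⟩ := tree_helly D.tree Finset.univ (fun o => {x | ∃ v ∈ B o, v ∈ D.bag x})
    (fun o => bags_conn D (hBc o)) (fun o o' => by
      obtain ⟨u, hu, v, hv, rfl | h⟩ := touch o o'
      · obtain ⟨i, hi⟩ := D.mem_bag u
        exact ⟨i, ⟨u, hu, hi⟩, ⟨u, hv, hi⟩⟩
      · obtain ⟨i, hi, hi'⟩ := D.edge_bag u v h
        exact ⟨i, ⟨u, hu, hi⟩, ⟨v, hv, hi'⟩⟩) ⟨none, Finset.mem_univ _⟩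
  refine ⟨b, ?_⟩
  by_cases hall : ∀ l, ∃ v ∈ {z | z ∈ (Q l).support}, v ∈ D.bag b
  · let F : Option (Fin t) → Set V := fun o =>
      match o with
      | none => Y
      | some l => {z | z ∈ (Q l).support}
    have := card_of_disjoint (D.bag b) F (by
      rintro (_ | l) (_ | l') hne
      · exact absurd rfl hne
      · exact Set.disjoint_left.2 fun z hz hz' => (hQ l' z hz').2 hz
      · exact Set.disjoint_left.2 fun z hz hz' => (hQ l z hz).2 hz'
      · exact Set.disjoint_left.2 fun z hz hz' =>
          hP l l' (fun h => hne (by rw [h])) z (hQ l z hz).1 (hQ l' z hz').1) (by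
      rintro (_ | l)
      · exact hb none (Finset.mem_univ _)
      · exact hall l)
    simpa using this
  · push Not at hall
    obtain ⟨l, hl⟩ := hall
    have := card_of_disjoint (D.bag b) K hd (by
      intro k
      obtain ⟨v, hv, hvb⟩ := hb (some (l, k)) (Finset.mem_univ _)
      rcases hv with hv | hv
      · exact absurd hvb (hl v hv)
      · exact ⟨v, hv, hvb⟩)
    simpa using this

lemma conc_nested (G : SimpleGraph V) (emb : PlaneEmb G)
    (m : ℕ) (cv : Fin m → V) (C : ∀ j, G.Walk (cv j) (cv j))
    (hcyc : ∀ j, (C j).IsCycle)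
    (hconc : ∀ j : Fin m, ∀ h : (j : ℕ) + 1 < m,
      emb.walkImage (C j) ⊆ interior (discOf (emb.walkImage (C ⟨(j : ℕ) + 1, h⟩))))
    (a b : Fin m) (hab : a < b) :
    discOf (emb.walkImage (C a)) ⊆ discOf (emb.walkImage (C b)) \ emb.walkImage (C b) := by
  obtain ⟨a, ha⟩ := a
  obtain ⟨b, hb⟩ := b
  have hab' : a + 1 ≤ b := hab
  clear hab
  induction b, hab' using Nat.le_induction with
  | base =>
    exact nested_lemma (emb.isCompact_walkImage _) (emb.isConnected_walkImage _)
      (emb.isConnected_walkImage _).nonempty (hconc ⟨a, ha⟩ hb) (emb.cycle_disjoint _ (hcyc _))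
  | succ b hab ih =>
    have hb' : b < m := by omega
    refine ((ih hb').trans Set.diff_subset).trans ?_
    exact nested_lemma (emb.isCompact_walkImage _) (emb.isConnected_walkImage _)
      (emb.isConnected_walkImage _).nonempty (hconc ⟨b, hb'⟩ hb) (emb.cycle_disjoint _ (hcyc _))

lemma conc_facts (G : SimpleGraph V) (emb : PlaneEmb G)
    (m : ℕ) (cv : Fin m → V) (C : ∀ j, G.Walk (cv j) (cv j))
    (hcyc : ∀ j, (C j).IsCycle)
    (hconc : ∀ j : Fin m, ∀ h : (j : ℕ) + 1 < m,
      emb.walkImage (C j) ⊆ interior (discOf (emb.walkImage (C ⟨(j : ℕ) + 1, h⟩)))) :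
    (∀ a b : Fin m, a ≠ b → Disjoint {x | x ∈ (C a).support} {x | x ∈ (C b).support}) ∧
    (∀ a k b : Fin m, a < k → k < b → ∀ u ∈ (C a).support, ∀ v ∈ (C b).support,
      ∀ p : G.Walk u v, ∃ x ∈ p.support, x ∈ (C k).support) := by
  have hn := conc_nested G emb m cv C hcyc hconc
  have hdis : ∀ a b : Fin m, a < b →
      Disjoint {x | x ∈ (C a).support} {x | x ∈ (C b).support} := by
    intro a b hab
    rw [Set.disjoint_left]
    intro x hx hx'
    exact (hn a b hab (Or.inl (emb.pos_mem_walkImage _ hx))).2 (emb.pos_mem_walkImage _ hx')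
  refine ⟨fun a b hab => ?_, ?_⟩
  · rcases lt_or_gt_of_ne hab with h | h
    · exact hdis a b h
    · exact (hdis b a h).symm
  · intro a k b hak hkb u hu v hv p
    by_contra hcon
    have hsub : emb.walkImage p ⊆ (emb.walkImage (C k))ᶜ := fun z hz hz' =>
      hcon (emb.walkImage_inter p (C k) hz hz')
    have h1 := hn a k hak (Or.inl (emb.pos_mem_walkImage _ hu))
    have h2 : emb.pos v ∉ discOf (emb.walkImage (C k)) := fun h =>
      (hn k b hkb h).2 (emb.pos_mem_walkImage _ hv)
    have h3 := (emb.isConnected_walkImage p).isPreconnected.subset_connectedComponentIn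
      (emb.pos_mem_walkImage p p.start_mem_support) hsub
      (emb.pos_mem_walkImage p p.end_mem_support)
    exact h2 (mem_discOf_of_comp h1.2 h3 h1.1).1

/-- If a plane graph has a concentric sequence of cycles with `|i − j| ≥ t + 1` and `t`
vertex-disjoint paths between `C_i` and `C_j`, then its treewidth is at least `t`:
every tree decomposition has a bag of size at least `t + 1`. -/
theorem stmt14 (G : SimpleGraph V) (emb : PlaneEmb G)
    (m : ℕ) (cv : Fin m → V) (C : ∀ j, G.Walk (cv j) (cv j))
    (hcyc : ∀ j, (C j).IsCycle)
    (hconc : ∀ j : Fin m, ∀ h : (j : ℕ) + 1 < m,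
      emb.walkImage (C j) ⊆ interior (discOf (emb.walkImage (C ⟨(j : ℕ) + 1, h⟩))))
    (t : ℕ) (i j : Fin m)
    (hij : (t : ℤ) + 1 ≤ |(i : ℤ) - (j : ℤ)|)
    (hpaths : DisjointPathFamily G {x | x ∈ (C i).support} {x | x ∈ (C j).support} t) :
    ∀ D : TreeDecomp G, ∃ b : D.ι, t + 1 ≤ (D.bag b).card := by

  obtain ⟨hdis, hsep⟩ := conc_facts G emb m cv C hcyc hconc
  obtain ⟨s, e, P, hs, he, -, hP⟩ := hpaths
  intro D
  have hYn : ({x | x ∈ (C j).support} : Set V).Nonempty := ⟨_, (C j).start_mem_support⟩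
  rcases le_total (i : ℕ) (j : ℕ) with hle | hle
  · have hij' : (i : ℕ) + t + 1 ≤ j := by
      rw [abs_of_nonpos (by omega)] at hij
      omega
    let κ : Fin (t + 1) → Fin m := fun k => ⟨i + k, by have := k.2; have := j.2; omega⟩
    have hκ0 : κ 0 = i := Fin.ext (by simp [κ])
    have hK0 : ∀ x, x ∈ (C (κ 0)).support ↔ x ∈ (C i).support := fun x => by rw [hκ0]
    refine comb t (fun k => {x | x ∈ (C (κ k)).support}) {x | x ∈ (C j).support}
      (fun k => WConn.walk _) (WConn.walk _) hYn (fun k l hkl => hdis _ _ ?_)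
      (fun k => hdis _ _ ?_) ?_ s e P (fun l => (hK0 _).2 (hs l)) he hP D
    · intro h
      apply hkl
      have := congrArg Fin.val h
      simp only [κ] at this
      exact Fin.ext (by omega)
    · intro h
      have := congrArg Fin.val h
      simp only [κ] at this
      have := k.2
      omega
    · intro u hu v hv p k
      replace hu := (hK0 u).1 hu
      by_cases hk : k = 0
      · subst hk
        exact ⟨u, p.start_mem_support, (hK0 u).2 hu⟩
      · have hk' : (k : ℕ) ≠ 0 := fun h => hk (Fin.ext h)
        refine hsep i (κ k) j (Fin.lt_def.2 ?_) (Fin.lt_def.2 ?_) u hu v hv p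
        · simp only [κ]; omega
        · have := k.2
          simp only [κ]; omega
  · have hij' : (j : ℕ) + t + 1 ≤ i := by
      rw [abs_of_nonneg (by omega)] at hij
      omega
    let κ : Fin (t + 1) → Fin m := fun k => ⟨i - k, by have := i.2; omega⟩
    have hκ0 : κ 0 = i := Fin.ext (by simp [κ])
    have hK0 : ∀ x, x ∈ (C (κ 0)).support ↔ x ∈ (C i).support := fun x => by rw [hκ0]
    refine comb t (fun k => {x | x ∈ (C (κ k)).support}) {x | x ∈ (C j).support}
      (fun k => WConn.walk _) (WConn.walk _) hYn (fun k l hkl => hdis _ _ ?_)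
      (fun k => hdis _ _ ?_) ?_ s e P (fun l => (hK0 _).2 (hs l)) he hP D
    · intro h
      apply hkl
      have := congrArg Fin.val h
      simp only [κ] at this
      have := k.2
      have := l.2
      exact Fin.ext (by omega)
    · intro h
      have := congrArg Fin.val h
      simp only [κ] at this
      have := k.2
      omega
    · intro u hu v hv p k
      replace hu := (hK0 u).1 hu
      by_cases hk : k = 0
      · subst hk
        exact ⟨u, p.start_mem_support, (hK0 u).2 hu⟩
      · have hk' : (k : ℕ) ≠ 0 := fun h => hk (Fin.ext h)
        have := k.2
        obtain ⟨x, hx, hx'⟩ := hsep j (κ k) i (Fin.lt_def.2 (by simp only [κ]; omega))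
          (Fin.lt_def.2 (by simp only [κ]; omega)) v hv u hu p.reverse
        exact ⟨x, by simpa using hx, hx'⟩
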